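/- arXiv:2210.02220 — 3 statements merged into one kernel-verified Lean document; each statement's English description precedes it below -/
import Mathlib

section
/- Let S : ℝⁿ → ℝ be integrable and compactly supported with ∫ S = 1, let ζ₀, …, ζ_d be pairwise distinct positive reals, and let a₀, …, a_d ∈ ℝ satisfy Σ_{m=0}^{d} a_m = 1 and Σ_{m=0}^{d} a_m ζ_m^{−j} = 0 for j = 1, …, d. Define S^deep(y) = Σ_{m=0}^{d} a_m ζ_mⁿ S(ζ_m y). Then ∫_{ℝⁿ} S^deep(y) dy = 1, and for every polynomial p in n variables that is homogeneous of degree j with 1 ≤ j ≤ d one has ∫_{ℝⁿ} S^deep(y) p(y) dy = 0; that is, S^deep is a normalized kernel orthogonal to all homogeneous polynomials of degrees 1 through d. -/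
open MeasureTheory

/-- An integrable function with compact support stays integrable after multiplication by a
continuous function. -/
theorem HasCompactSupport.integrable_mul_continuous {n : ℕ} {S q : (Fin n → ℝ) → ℝ}
    (hInt : Integrable S) (hsupp : HasCompactSupport S) (hq : Continuous q) :
    Integrable fun y => S y * q y := by
  rw [← integrableOn_iff_integrable_of_support_subset (s := tsupport S)
    ((Function.support_mul_subset_left S q).trans (subset_tsupport S))]
  exact hInt.integrableOn.mul_continuousOn hq.continuousOn hsupp

/-- Evaluation of a homogeneous polynomial at a rescaled point. -/
theorem MvPolynomial.IsHomogeneous.eval_smul_point {σ R : Type*} [CommSemiring R]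
    {p : MvPolynomial σ R} {j : ℕ} (hp : p.IsHomogeneous j) (c : R) (y : σ → R) :
    eval (c • y) p = c ^ j * eval y p := by
  rw [eval_eq, eval_eq, Finset.mul_sum]
  refine Finset.sum_congr rfl fun k hk => ?_
  have hdeg : ∑ i ∈ k.support, k i = j := by
    rw [← hp (mem_support_iff.mp hk), Finsupp.weight_apply]
    simp [Finsupp.sum]
  simp only [Pi.smul_apply, smul_eq_mul, mul_pow, Finset.prod_mul_distrib,
    Finset.prod_pow_eq_pow_sum, hdeg]
  ring

/-- The moment of a combination of rescaled kernels against a homogeneous polynomial of degree `j`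
is the moment of the kernel times `∑ m, a m * ζ m ^ (-j)`. -/
theorem integral_sum_rescaled_mul_eval {ι : Type*} [Fintype ι] {n : ℕ} {S : (Fin n → ℝ) → ℝ}
    (hInt : Integrable S) (hsupp : HasCompactSupport S) {ζ : ι → ℝ} (hζ : ∀ m, 0 < ζ m)
    (a : ι → ℝ) {j : ℕ} {p : MvPolynomial (Fin n) ℝ} (hp : p.IsHomogeneous j) :
    ∫ y, (∑ m, a m * ζ m ^ n * S (ζ m • y)) * MvPolynomial.eval y p =
      (∑ m, a m * ζ m ^ (-(j : ℤ))) * ∫ y, S y * MvPolynomial.eval y p := by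
  have hg := hsupp.integrable_mul_continuous hInt p.continuous_eval
  have hrescale : ∀ y, (∑ m, a m * ζ m ^ n * S (ζ m • y)) * MvPolynomial.eval y p =
      ∑ m, a m * ζ m ^ n * ζ m ^ (-(j : ℤ)) *
        (S (ζ m • y) * MvPolynomial.eval (ζ m • y) p) := by
    intro y
    rw [Finset.sum_mul]
    refine Finset.sum_congr rfl fun m _ => ?_
    have := (hζ m).ne'
    rw [hp.eval_smul_point, zpow_neg, zpow_natCast]
    field_simp
  simp_rw [hrescale]
  rw [integral_finsetSum _ fun m _ => (hg.comp_smul (hζ m).ne').const_mul _, Finset.sum_mul]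
  refine Finset.sum_congr rfl fun m _ => ?_
  have hpow : 0 < ζ m ^ n := pow_pos (hζ m) n
  rw [integral_const_mul,
    Measure.integral_comp_smul volume (fun y => S y * MvPolynomial.eval y p) (ζ m),
    Module.finrank_fin_fun, abs_of_pos (inv_pos.mpr hpow), smul_eq_mul]
  field_simp

/-- Let `S : ℝⁿ → ℝ` be integrable, compactly supported, with `∫ S = 1`;
let `ζ₀, …, ζ_d` be pairwise distinct positive reals and `a₀, …, a_d` reals with
`Σ aₘ = 1` and `Σ aₘ ζₘ⁻ʲ = 0` for `j = 1, …, d`.  Define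
`S^deep(y) = Σₘ aₘ ζₘⁿ S(ζₘ y)`.  Then `∫ S^deep = 1`, and for every polynomial `p` in `n`
variables homogeneous of degree `j` with `1 ≤ j ≤ d`, `∫ S^deep(y) p(y) dy = 0`; i.e.
`S^deep` is a normalized kernel orthogonal to all homogeneous polynomials of degrees
`1` through `d` (a kernel of Nash depth `d`). -/
theorem statement9 (n d : ℕ) (S : (Fin n → ℝ) → ℝ)
    (hInt : Integrable S) (hsupp : HasCompactSupport S)
    (hS1 : ∫ y, S y = 1)
    (ζ : Fin (d + 1) → ℝ) (hζpos : ∀ m, 0 < ζ m) (hinj : Function.Injective ζ)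
    (a : Fin (d + 1) → ℝ) (ha1 : ∑ m, a m = 1)
    (haj : ∀ j : ℕ, 1 ≤ j → j ≤ d → ∑ m, a m * (ζ m) ^ (-(j : ℤ)) = 0)
    (Sdeep : (Fin n → ℝ) → ℝ)
    (hSdeep : ∀ y, Sdeep y = ∑ m, a m * (ζ m) ^ n * S (ζ m • y)) :
    (∫ y, Sdeep y = 1) ∧
    ∀ (j : ℕ) (p : MvPolynomial (Fin n) ℝ), p.IsHomogeneous j → 1 ≤ j → j ≤ d →
      ∫ y, Sdeep y * MvPolynomial.eval y p = 0 := by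
  simp_rw [hSdeep]
  refine ⟨?_, fun j p hp hj hjd => ?_⟩
  · simpa [ha1, hS1] using integral_sum_rescaled_mul_eval hInt hsupp hζpos a
      (MvPolynomial.isHomogeneous_one (Fin n) ℝ)
  · rw [integral_sum_rescaled_mul_eval hInt hsupp hζpos a hp, haj j hj hjd, zero_mul]
end

section
/- Let S : ℝⁿ → ℝ be continuous, supported in the closed unit ball, with ∫ S = 1 and with ∫ S(y) p(y) dy = 0 for every polynomial p homogeneous of degree j, 1 ≤ j ≤ d. Let f : ℝⁿ → ℝ be of class C^{d+1} with sup_{x ∈ ℝⁿ} ‖D^{d+1} f(x)‖ ≤ M (supremum of the operator norm of the (d+1)-st total derivative). Then for every ζ ≥ 1 and every x ∈ ℝⁿ, |∫_{ℝⁿ} ζⁿ S(ζ y) f(x + y) dy − f(x)| ≤ (M / (d+1)!) (∫_{ℝⁿ} |S(y)| dy) ζ^{−(d+1)}. In words: a normalized mollifier orthogonal to homogeneous polynomials of degrees 1 through d approximates C^{d+1} functions to order ζ^{−(d+1)}, which is the defining estimate of Nash depth. -/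
open MeasureTheory

/-- **Taylor's inequality** for a function whose `(d+1)`-st derivative is bounded. -/
theorem norm_sub_taylor_sum_le {E F : Type*} [NormedAddCommGroup E] [NormedSpace ℝ E]
    [NormedAddCommGroup F] [NormedSpace ℝ F] [CompleteSpace F] {d : ℕ} {f : E → F} {M : ℝ}
    (hf : ContDiff ℝ (d + 1) f) (hM : ∀ x, ‖iteratedFDeriv ℝ (d + 1) f x‖ ≤ M) (x v : E) :
    ‖f (x + v) - ∑ k ∈ Finset.range (d + 1),
        (Nat.factorial k : ℝ)⁻¹ • iteratedFDeriv ℝ k f x (fun _ ↦ v)‖ ≤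
      M / Nat.factorial (d + 1) * ‖v‖ ^ (d + 1) := by
  rw [map_add_eq_sum_add_integral_iteratedFDeriv (n := d) (x := x) (y := v)
    fun t _ ↦ hf.contDiffAt, add_sub_cancel_left, norm_smul]
  have hpow : ∫ t in (0 : ℝ)..1, (1 - t) ^ d = ((d : ℝ) + 1)⁻¹ := by
    rw [intervalIntegral.integral_comp_sub_left (fun t : ℝ ↦ t ^ d) 1]
    simp
  have hint : ‖∫ t in (0 : ℝ)..1,
      (1 - t) ^ d • iteratedFDeriv ℝ (d + 1) f (x + t • v) (fun _ ↦ v)‖ ≤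
      ∫ t in (0 : ℝ)..1, (1 - t) ^ d * (M * ‖v‖ ^ (d + 1)) := by
    refine intervalIntegral.norm_integral_le_of_norm_le zero_le_one ?_
      (Continuous.intervalIntegrable (by fun_prop) _ _)
    refine Filter.Eventually.of_forall fun t ht ↦ ?_
    have h0 : 0 ≤ (1 - t) ^ d := pow_nonneg (sub_nonneg.2 ht.2) d
    rw [norm_smul, Real.norm_of_nonneg h0]
    gcongr
    refine (ContinuousMultilinearMap.le_opNorm _ _).trans ?_
    rw [Finset.prod_const, Finset.card_univ, Fintype.card_fin]
    gcongr
    exact hM _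
  rw [intervalIntegral.integral_mul_const, hpow] at hint
  calc _ ≤ ‖(Nat.factorial d : ℝ)⁻¹‖ * (((d : ℝ) + 1)⁻¹ * (M * ‖v‖ ^ (d + 1))) := by gcongr
    _ = _ := by
      rw [Real.norm_of_nonneg (by positivity), Nat.factorial_succ]
      push_cast
      field_simp

/-- The diagonal of a `k`-linear form on `ℝⁿ` is a homogeneous polynomial of degree `k`. -/
theorem MultilinearMap.exists_isHomogeneous_eval_eq {ι R : Type*} [Fintype ι] [CommRing R]
    {k : ℕ} (L : MultilinearMap R (fun _ : Fin k ↦ ι → R) R) :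
    ∃ p : MvPolynomial ι R, p.IsHomogeneous k ∧
      ∀ y : ι → R, MvPolynomial.eval y p = L fun _ ↦ y := by
  classical
  refine ⟨∑ r : Fin k → ι, MvPolynomial.C (L fun i ↦ Pi.single (r i) 1) *
    ∏ i, MvPolynomial.X (r i), ?_, fun y ↦ ?_⟩
  · refine MvPolynomial.IsHomogeneous.sum _ _ _ fun r _ ↦ ?_
    simpa using (MvPolynomial.isHomogeneous_C ι (L fun i ↦ Pi.single (r i) 1)).mul
      (MvPolynomial.IsHomogeneous.prod Finset.univ (fun i ↦ MvPolynomial.X (R := R) (r i))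
        (fun _ ↦ 1) fun i _ ↦ MvPolynomial.isHomogeneous_X R (r i))
  · have hy : y = ∑ j, y j • (Pi.single j 1 : ι → R) := pi_eq_sum_univ' y
    conv_rhs => rw [hy]
    rw [L.map_sum fun _ j ↦ y j • (Pi.single j 1 : ι → R)]
    simp only [MultilinearMap.map_smul_univ, _root_.map_sum, map_mul, MvPolynomial.eval_C,
      map_prod, MvPolynomial.eval_X, smul_eq_mul]
    exact Finset.sum_congr rfl fun r _ ↦ mul_comm _ _

/-- Change of variables `z = ζ y` in a mollification. -/
theorem integral_rescaled_kernel_mul {n : ℕ} (S g : (Fin n → ℝ) → ℝ) {ζ : ℝ} (hζ : 0 < ζ) :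
    ∫ y, ζ ^ n * S (ζ • y) * g y = ∫ z, S z * g (ζ⁻¹ • z) := by
  have h := Measure.integral_comp_smul volume (fun z ↦ ζ ^ n * (S z * g (ζ⁻¹ • z))) ζ
  simp only [inv_smul_smul₀ hζ.ne', Module.finrank_fin_fun, smul_eq_mul, integral_const_mul] at h
  rw [abs_of_pos (by positivity), inv_mul_cancel_left₀ (by positivity)] at h
  simpa only [mul_assoc, integral_const_mul] using h

/-- Let `S : ℝⁿ → ℝ` be continuous, supported in the closed unit ball,
with `∫ S = 1` and `∫ S(y) p(y) dy = 0` for every polynomial `p` homogeneous of degree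
`j`, `1 ≤ j ≤ d`.  Let `f : ℝⁿ → ℝ` be `C^{d+1}` with `‖D^{d+1} f(x)‖ ≤ M` for all `x`.
Then for every `ζ ≥ 1` and every `x`,
`|∫ ζⁿ S(ζ y) f(x + y) dy − f(x)| ≤ (M / (d+1)!) (∫ |S|) ζ^{−(d+1)}`:
a normalized mollifier orthogonal to homogeneous polynomials of degrees `1, …, d`
approximates `C^{d+1}` functions to order `ζ^{−(d+1)}` (the defining estimate of
Nash depth). -/
theorem statement10 (n d : ℕ) (S : (Fin n → ℝ) → ℝ)
    (hScont : Continuous S)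
    (hSsupp : ∀ y : Fin n → ℝ, y ∉ Metric.closedBall (0 : Fin n → ℝ) 1 → S y = 0)
    (hS1 : ∫ y, S y = 1)
    (horth : ∀ (j : ℕ) (p : MvPolynomial (Fin n) ℝ), p.IsHomogeneous j → 1 ≤ j → j ≤ d →
      ∫ y, S y * MvPolynomial.eval y p = 0)
    (f : (Fin n → ℝ) → ℝ) (M : ℝ)
    (hf : ContDiff ℝ (d + 1) f)
    (hM : ∀ x, ‖iteratedFDeriv ℝ (d + 1) f x‖ ≤ M) :
    ∀ ζ : ℝ, 1 ≤ ζ → ∀ x : Fin n → ℝ,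
      |(∫ y, ζ ^ n * S (ζ • y) * f (x + y)) - f x| ≤
        (M / (Nat.factorial (d + 1))) * (∫ y, |S y|) * ζ ^ (-((d : ℤ) + 1)) := by
  intro ζ hζ x
  have hζ0 : 0 < ζ := one_pos.trans_le hζ
  have hSc : HasCompactSupport S :=
    HasCompactSupport.intro (isCompact_closedBall (0 : Fin n → ℝ) 1) fun y hy ↦ hSsupp y hy
  have hint : ∀ g : (Fin n → ℝ) → ℝ, Continuous g → Integrable fun z ↦ S z * g z := fun g hg ↦
    (hScont.mul hg).integrable_of_hasCompactSupport hSc.mul_right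
  have hfc : Continuous fun z ↦ f (x + ζ⁻¹ • z) := hf.continuous.comp (by fun_prop)
  set T : ℕ → (Fin n → ℝ) → ℝ := fun k z ↦
    (Nat.factorial k : ℝ)⁻¹ • iteratedFDeriv ℝ k f x fun _ ↦ ζ⁻¹ • z with hT
  have hTc : ∀ k, Continuous (T k) := fun k ↦
    ((iteratedFDeriv ℝ k f x).cont.comp
      (continuous_pi fun _ ↦ continuous_const_smul ζ⁻¹)).const_smul (Nat.factorial k : ℝ)⁻¹
  have hTk : ∀ k, 1 ≤ k → k ≤ d → ∫ z, S z * T k z = 0 := by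
    intro k hk1 hkd
    obtain ⟨p, hp, hpe⟩ :=
      (iteratedFDeriv ℝ k f x).toMultilinearMap.exists_isHomogeneous_eval_eq
    have heq : ∀ z, S z * T k z =
        ((Nat.factorial k : ℝ)⁻¹ * ζ⁻¹ ^ k) * (S z * MvPolynomial.eval z p) := by
      intro z
      have hs : (iteratedFDeriv ℝ k f x fun _ ↦ ζ⁻¹ • z) =
          ζ⁻¹ ^ k * MvPolynomial.eval z p := by
        rw [hpe z, (iteratedFDeriv ℝ k f x).map_smul_univ (fun _ ↦ ζ⁻¹) fun _ ↦ z]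
        simp
      simp only [hT, hs, smul_eq_mul]
      ring
    simp only [heq, integral_const_mul, horth k p hp hk1 hkd, mul_zero]
  have hTsum : ∫ z, S z * ∑ k ∈ Finset.range (d + 1), T k z = f x := by
    simp only [Finset.mul_sum]
    rw [integral_finsetSum _ fun k _ ↦ hint _ (hTc k), Finset.sum_range_succ',
      Finset.sum_eq_zero fun k hk ↦
        hTk (k + 1) (Nat.le_add_left 1 k) (Finset.mem_range.1 hk), zero_add]
    simp [hT, integral_mul_const, hS1]
  have hsumc : Continuous fun z ↦ ∑ k ∈ Finset.range (d + 1), T k z :=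
    continuous_finsetSum _ fun k _ ↦ hTc k
  rw [integral_rescaled_kernel_mul S (fun y ↦ f (x + y)) hζ0, ← hTsum,
    ← integral_sub (hint _ hfc) (hint _ hsumc), ← Real.norm_eq_abs]
  have hM0 : 0 ≤ M := (norm_nonneg _).trans (hM x)
  have hzpow : ζ ^ (-((d : ℤ) + 1)) = ζ⁻¹ ^ (d + 1) := by
    rw [zpow_neg, inv_pow]
    norm_cast
  calc _ ≤ ∫ z, |S z| * (M / Nat.factorial (d + 1) * ζ⁻¹ ^ (d + 1)) := by
        refine norm_integral_le_of_norm_le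
          ((hScont.integrable_of_hasCompactSupport hSc).abs.mul_const _)
          (Filter.Eventually.of_forall fun z ↦ ?_)
        rw [← mul_sub, norm_mul, Real.norm_eq_abs (S z)]
        by_cases hz : z ∈ Metric.closedBall (0 : Fin n → ℝ) 1
        · gcongr
          refine (norm_sub_taylor_sum_le hf hM x (ζ⁻¹ • z)).trans ?_
          rw [norm_smul, Real.norm_of_nonneg (inv_nonneg.2 hζ0.le)]
          gcongr
          exact mul_le_of_le_one_right (inv_nonneg.2 hζ0.le) (mem_closedBall_zero_iff.1 hz)
        · simp [hSsupp z hz]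
    _ = _ := by
      rw [integral_mul_const, hzpow]
      ring
end

section
/- Let a, x, y, z be real numbers with z ≠ 0. Then there exists a unique r > 0 satisfying x² + y² + z² = r² + a²(1 − z²/r²); that is, the defining implicit equation of the Kerr radial function r(x, y, z) has exactly one positive solution away from the equatorial plane z = 0. -/
/-- A monic real quadratic `s² - b s - c` with `0 ≤ c`, and `0 < b` in case `c = 0`,
has exactly one positive root. -/
theorem existsUnique_pos_root_quadratic {b c : ℝ} (hc : 0 ≤ c) (hbc : 0 < c ∨ 0 < b) :
    ∃! s : ℝ, 0 < s ∧ s ^ 2 = b * s + c := by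
  have hsq : √(b ^ 2 + 4 * c) ^ 2 = b ^ 2 + 4 * c := Real.sq_sqrt (by positivity)
  refine ⟨(b + √(b ^ 2 + 4 * c)) / 2, ⟨?_, by linear_combination hsq / 4⟩, ?_⟩
  · have hnonneg := Real.sqrt_nonneg (b ^ 2 + 4 * c)
    rcases hbc with h | h
    · have := neg_lt_of_abs_lt (Real.lt_sqrt_of_sq_lt (x := |b|) (y := b ^ 2 + 4 * c)
        (by rw [sq_abs]; linarith))
      linarith
    · linarith
  · rintro t ⟨ht, hteq⟩
    have hb : (2 * t - b) ^ 2 = b ^ 2 + 4 * c := by linear_combination 4 * hteq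
    have hpos : 0 ≤ 2 * t - b := by
      have : t * (2 * t - b) = t ^ 2 + c := by linear_combination hteq
      exact (pos_of_mul_pos_right (this ▸ by positivity) ht.le).le
    rw [← hb, Real.sqrt_sq hpos]
    ring

/-- For `r > 0`, the Kerr radial equation is a quadratic equation in `r ^ 2`. -/
theorem kerr_radial_equation_iff {a x y z r : ℝ} (hr : 0 < r) :
    x ^ 2 + y ^ 2 + z ^ 2 = r ^ 2 + a ^ 2 * (1 - z ^ 2 / r ^ 2) ↔
      (r ^ 2) ^ 2 = (x ^ 2 + y ^ 2 + z ^ 2 - a ^ 2) * r ^ 2 + a ^ 2 * z ^ 2 := by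
  field_simp
  constructor <;> intro h <;> linear_combination -h

/-- Let `a, x, y, z` be real with `z ≠ 0`.  Then there exists a unique
`r > 0` satisfying `x² + y² + z² = r² + a²(1 − z²/r²)`: the defining implicit equation of
the Kerr radial function `r(x, y, z)` has exactly one positive solution away from the
equatorial plane `z = 0`. -/
theorem statement14 (a x y z : ℝ) (hz : z ≠ 0) :
    ∃! r : ℝ, 0 < r ∧
      x ^ 2 + y ^ 2 + z ^ 2 = r ^ 2 + a ^ 2 * (1 - z ^ 2 / r ^ 2) := by
  have hbc : 0 < a ^ 2 * z ^ 2 ∨ 0 < x ^ 2 + y ^ 2 + z ^ 2 - a ^ 2 := by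
    rcases eq_or_ne a 0 with rfl | ha
    · right
      have : 0 < z ^ 2 := by positivity
      nlinarith [sq_nonneg x, sq_nonneg y]
    · left
      positivity
  obtain ⟨s, ⟨hs, hseq⟩, huniq⟩ := existsUnique_pos_root_quadratic (by positivity) hbc
  refine ⟨√s, ⟨Real.sqrt_pos.2 hs, ?_⟩, ?_⟩
  · rwa [kerr_radial_equation_iff (Real.sqrt_pos.2 hs), Real.sq_sqrt hs.le]
  · rintro r ⟨hr, hreq⟩
    rw [← huniq (r ^ 2) ⟨by positivity, (kerr_radial_equation_iff hr).1 hreq⟩,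
      Real.sqrt_sq hr.le]
end
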